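/- The letters 0 and 1 each have frequency 1/2 in the sequence T: the limit as x → ∞ of (1/x)·#{N < x : T(N) = 0} equals 1/2, and the limit as x → ∞ of (1/x)·#{N < x : T(N) = 1} equals 1/2. -/

import Mathlib

/-!
Writing `φ ^ k + φ ^ (-k)` or `φ ^ k - φ ^ (-k)` for the Lucas number `L k` according to the parity
of `k`, one sees how adding a Lucas number changes a base-phi expansion. Consequently the words
`A n` and `B n` of signs `(-1) ^ T N`, read over `[0, L (2 * n - 1)]` and over the gap strictly
between `L (2 * n + 1)` and `L (2 * n + 2)` respectively, satisfy
`A (n + 2) = A (n + 1) ++ B n ++ A (n + 1)` and `B (n + 1) = -B n ++ A n ++ -B n`.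
The sums `a n` of `A n` then obey `a (n + 3) = 4 * a (n + 1) + a n`. The roots of
`x ^ 3 = 4 * x + 1` have modulus below `9 / 4`, whereas the lengths of the words grow like the
powers of `φ ^ 2 > 5 / 2`, so the partial sums of `(-1) ^ T N` are of smaller order than the number
of their terms.
-/

/-- The golden mean φ = (1+√5)/2. -/
noncomputable def phi : ℝ := (1 + Real.sqrt 5) / 2

/-- `d : ℤ → ℕ` is a base-phi expansion of `N`: finitely supported, digits at most 1,
no two consecutive digits equal 1, and `∑ d i * φ^i = N`. -/
def IsBasePhi (N : ℕ) (d : ℤ → ℕ) : Prop :=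
  {i : ℤ | d i ≠ 0}.Finite ∧ (∀ i, d i ≤ 1) ∧ (∀ i, d i * d (i + 1) = 0) ∧
    ∑' i : ℤ, (d i : ℝ) * phi ^ i = (N : ℝ)

/-- The Lucas numbers: L 0 = 2, L 1 = 1, L (n+2) = L (n+1) + L n. -/
def Lucas : ℕ → ℕ
  | 0 => 2
  | 1 => 1
  | n + 2 => Lucas (n + 1) + Lucas n

/-- The sum of the digits of a (finitely supported) digit function. -/
noncomputable def digitSum (d : ℤ → ℕ) : ℕ := ∑' i : ℤ, d i

open Filter Asymptotics

section Words

variable {α β : Type*}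

/-- The word `w`, placed on the consecutive integers `s, s + 1, …`, has at each of them a letter
related to that integer by `P`. -/
def ReadsFrom (P : ℕ → α → Prop) (s : ℕ) (w : List α) : Prop :=
  ∀ i (hi : i < w.length), P (s + i) w[i]

namespace ReadsFrom

variable {P : ℕ → α → Prop} {s t : ℕ} {u v : List α}

theorem nil : ReadsFrom P s [] := fun _ hi => absurd hi (Nat.not_lt_zero _)

theorem append (hu : ReadsFrom P s u) (hv : ReadsFrom P t v) (ht : s + u.length = t) :
    ReadsFrom P s (u ++ v) := by
  intro i hi
  rw [List.length_append] at hi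
  rcases lt_or_ge i u.length with h | h
  · rw [List.getElem_append_left h]
    exact hu i h
  · rw [List.getElem_append_right h, show s + i = t + (i - u.length) by omega]
    exact hv _ (by omega)

theorem map {Q : ℕ → β → Prop} (hu : ReadsFrom P s u) (t : ℕ) (f : α → β)
    (hPQ : ∀ N a, P N a → Q (t + N) (f a)) : ReadsFrom Q (t + s) (u.map f) := by
  intro i hi
  rw [List.getElem_map, add_assoc]
  exact hPQ _ _ (hu i (by simpa using hi))

theorem shift {Q : ℕ → α → Prop} (hu : ReadsFrom P s u) (t : ℕ)
    (hPQ : ∀ N a, P N a → Q (t + N) a) : ReadsFrom Q (t + s) u := by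
  simpa using hu.map t id hPQ

theorem sum_take [AddCommMonoid α] {f : ℕ → α} (hu : ReadsFrom (fun N a => f N = a) 0 u) {k : ℕ}
    (hk : k ≤ u.length) : (u.take k).sum = ∑ N ∈ Finset.range k, f N := by
  induction k with
  | zero => simp
  | succ k ih =>
    rw [List.sum_take_succ _ _ hk, Finset.sum_range_succ, ih (by omega), ← hu k hk, zero_add]

end ReadsFrom

/-- All partial sums of the word `w` are at most `M` in absolute value. -/
def PrefixSumsLE [AddCommGroup α] [LinearOrder α] (w : List α) (M : α) : Prop :=
  ∀ k, |(w.take k).sum| ≤ M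

namespace PrefixSumsLE

variable [AddCommGroup α] [LinearOrder α] {u v w : List α} {M K : α}

theorem mono (h : PrefixSumsLE w M) (hMK : M ≤ K) : PrefixSumsLE w K :=
  fun k => (h k).trans hMK

theorem map_neg (h : PrefixSumsLE w M) : PrefixSumsLE (w.map Neg.neg) M := by
  intro k
  rw [← List.map_take, ← List.sum_neg, abs_neg]
  exact h k

variable [IsOrderedAddMonoid α]

theorem append (hu : PrefixSumsLE u M) (hv : PrefixSumsLE v M) :
    PrefixSumsLE (u ++ v) (|u.sum| + M) := by
  intro k
  rw [List.take_append, List.sum_append]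
  rcases le_total k u.length with h | h
  · rw [Nat.sub_eq_zero_of_le h, List.take_zero, List.sum_nil, add_zero]
    exact (hu k).trans (le_add_of_nonneg_left (abs_nonneg _))
  · rw [List.take_of_length_le h]
    exact (abs_add_le _ _).trans (by gcongr; exact hv _)

theorem append_append (hu : PrefixSumsLE u M) (hv : PrefixSumsLE v M) (hw : PrefixSumsLE w M) :
    PrefixSumsLE (u ++ v ++ w) (|u.sum| + (|v.sum| + M)) := by
  rw [List.append_assoc]
  exact (hu.mono (le_add_of_nonneg_left (abs_nonneg _))).append (hv.append hw)

end PrefixSumsLE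

end Words

section Asymptotics

theorem isBigO_rpow_logb_of_le_pow {S : ℕ → ℝ} {C q r : ℝ} (hr : 1 ≤ r) (hq : 1 < q)
    (hS : ∀ n x : ℕ, (x : ℝ) ≤ q ^ n → |S x| ≤ C * r ^ n) :
    S =O[atTop] fun x : ℕ => (x : ℝ) ^ Real.logb q r := by
  have hq0 : 0 < q := zero_lt_one.trans hq
  have hr0 : 0 < r := zero_lt_one.trans_le hr
  have hC : 0 ≤ C := by simpa using (abs_nonneg _).trans (hS 0 0 (by simp))
  refine IsBigO.of_bound (C * r) ?_
  filter_upwards [eventually_ge_atTop 1] with x hx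
  obtain ⟨n, hn, hn'⟩ := exists_nat_pow_near (Nat.one_le_cast.2 hx : (1 : ℝ) ≤ x) hq
  have hrx : r ^ n ≤ (x : ℝ) ^ Real.logb q r :=
    calc r ^ n = (q ^ n) ^ Real.logb q r := by
          rw [← Real.rpow_pow_comm hq0.le, Real.rpow_logb hq0 hq.ne' hr0]
      _ ≤ (x : ℝ) ^ Real.logb q r :=
          Real.rpow_le_rpow (by positivity) hn (Real.logb_nonneg hq hr)
  calc ‖S x‖ ≤ C * r ^ (n + 1) := hS (n + 1) x hn'.le
    _ = C * r * r ^ n := by ring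
    _ ≤ C * r * (x : ℝ) ^ Real.logb q r := by gcongr
    _ = C * r * ‖(x : ℝ) ^ Real.logb q r‖ := by rw [Real.norm_of_nonneg (by positivity)]

theorem isLittleO_rpow_id_atTop {a : ℝ} (ha : a < 1) :
    (fun x : ℝ => x ^ a) =o[atTop] fun x => x := by
  refine (isLittleO_iff_tendsto' ?_).2 ?_
  · filter_upwards [eventually_gt_atTop 0] with x hx hx0 using absurd hx0 hx.ne'
  · refine (tendsto_rpow_neg_atTop (sub_pos.2 ha)).congr' ?_
    filter_upwards [eventually_gt_atTop 0] with x hx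
    rw [neg_sub, Real.rpow_sub_one hx.ne']

theorem isLittleO_natCast_of_le_pow {S : ℕ → ℝ} {C q r : ℝ} (hr : 1 ≤ r) (hrq : r < q)
    (hS : ∀ n x : ℕ, (x : ℝ) ≤ q ^ n → |S x| ≤ C * r ^ n) :
    S =o[atTop] fun x : ℕ => (x : ℝ) := by
  have hq : 1 < q := hr.trans_lt hrq
  have hlog : Real.logb q r < 1 := by
    rw [← Real.logb_self_eq_one hq]
    exact Real.logb_lt_logb hq (by linarith) hrq
  exact (isBigO_rpow_logb_of_le_pow hr hq hS).trans_isLittleO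
    ((isLittleO_rpow_id_atTop hlog).comp_tendsto tendsto_natCast_atTop_atTop)

variable {T : ℕ → ℕ}

theorem card_filter_range_eq (hT : ∀ N, T N < 2) {c : ℕ} (hc : c < 2) (x : ℕ) :
    (((Finset.range x).filter fun N => T N = c).card : ℝ) =
      (x + (-1) ^ c * ∑ N ∈ Finset.range x, (-1 : ℝ) ^ T N) / 2 := by
  have hx : (x : ℝ) = ∑ N ∈ Finset.range x, 1 := by simp
  rw [Finset.card_filter, hx, Finset.mul_sum, ← Finset.sum_add_distrib, Finset.sum_div]
  push_cast
  refine Finset.sum_congr rfl fun N _ => ?_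
  have := hT N
  interval_cases T N <;> interval_cases c <;> norm_num

theorem tendsto_card_filter_range_div (hT : ∀ N, T N < 2)
    (hS : (fun x => ∑ N ∈ Finset.range x, (-1 : ℝ) ^ T N) =o[atTop] fun x : ℕ => (x : ℝ))
    {c : ℕ} (hc : c < 2) :
    Tendsto (fun x : ℕ => (((Finset.range x).filter fun N => T N = c).card : ℝ) / x)
      atTop (nhds (1 / 2)) := by
  have h := ((hS.tendsto_div_nhds_zero.const_mul ((-1) ^ c)).const_add 1).div_const 2
  rw [mul_zero, add_zero] at h
  refine h.congr' ?_
  filter_upwards [eventually_gt_atTop 0] with x hx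
  rw [card_filter_range_eq hT hc]
  field_simp

end Asymptotics

section Lucas

theorem phi_pos : 0 < phi := Real.goldenRatio_pos

theorem phi_zpow_add_two (i : ℤ) : phi ^ (i + 2) = phi ^ (i + 1) + phi ^ i := by
  have h : phi ^ 2 = phi + 1 := Real.goldenRatio_sq
  rw [zpow_add₀ phi_pos.ne', zpow_add_one₀ phi_pos.ne']
  norm_cast
  rw [h]
  ring

theorem two_mul_phi_zpow (i : ℤ) : 2 * phi ^ i = phi ^ (i + 1) + phi ^ (i - 2) := by
  have h := phi_zpow_add_two (i - 1)
  have h' := phi_zpow_add_two (i - 2)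
  ring_nf at h h' ⊢
  linarith

theorem lucas_add_two (n : ℕ) : Lucas (n + 2) = Lucas (n + 1) + Lucas n := rfl

theorem lucas_eq_goldenRatio_pow_add (n : ℕ) :
    (Lucas n : ℝ) = Real.goldenRatio ^ n + Real.goldenConj ^ n := by
  induction n using Lucas.induct with
  | case1 => norm_num [Lucas]
  | case2 => simp [Lucas, Real.goldenRatio_add_goldenConj]
  | case3 n ih₁ ih₀ =>
    rw [lucas_add_two, Nat.cast_add, ih₁, ih₀]
    have hφ := Real.goldenRatio_sq
    have hψ := Real.goldenConj_sq
    generalize Real.goldenRatio = φ, Real.goldenConj = ψ at *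
    change _ = φ ^ (n + 2) + ψ ^ (n + 2)
    linear_combination -φ ^ n * hφ - ψ ^ n * hψ

theorem lucas_eq_phi_zpow (n : ℕ) :
    (Lucas n : ℝ) = phi ^ (n : ℤ) + (-1) ^ n * phi ^ (-n : ℤ) := by
  have hphi : phi = Real.goldenRatio := rfl
  rw [lucas_eq_goldenRatio_pow_add, zpow_neg, zpow_natCast, ← inv_pow, hphi,
    Real.inv_goldenRatio, ← mul_pow, neg_one_mul, neg_neg]

theorem lucas_two_mul_eq (n : ℕ) :
    (Lucas (2 * n) : ℝ) = phi ^ (2 * n : ℤ) + phi ^ (-(2 * n) : ℤ) := by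
  simpa using lucas_eq_phi_zpow (2 * n)

theorem lucas_two_mul_add_one_eq (n : ℕ) :
    (Lucas (2 * n + 1) : ℝ) = phi ^ (2 * n + 1 : ℤ) - phi ^ (-(2 * n + 1) : ℤ) := by
  simpa [pow_succ, sub_eq_add_neg] using lucas_eq_phi_zpow (2 * n + 1)

theorem pow_le_lucas_odd (n : ℕ) : (5 / 2 : ℝ) ^ n ≤ Lucas (2 * n + 1) := by
  suffices h : (5 / 2 : ℝ) ^ n ≤ Lucas (2 * n + 1) ∧ (Lucas (2 * n + 1) : ℝ) ≤ 2 * Lucas (2 * n)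
    from h.1
  induction n with
  | zero => norm_num [Lucas]
  | succ n ih =>
    rw [mul_add_one, lucas_add_two (2 * n + 1), lucas_add_two (2 * n), pow_succ]
    push_cast
    constructor <;> linarith [ih.1, ih.2]

end Lucas

section Expansions

/-- `x` is a sum of powers of `phi` with pairwise non-consecutive exponents, all in `s`, and `ε` is
`(-1)` to the number of summands. -/
def HasGoldenRep (s : Set ℤ) (ε x : ℝ) : Prop :=
  ∃ F : Finset ℤ, ↑F ⊆ s ∧ (∀ i ∈ F, i + 1 ∉ F) ∧ (-1) ^ F.card = ε ∧ ∑ i ∈ F, phi ^ i = x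

namespace HasGoldenRep

variable {s s' : Set ℤ} {ε x : ℝ}

theorem mono (h : HasGoldenRep s ε x) (hs : s ⊆ s') : HasGoldenRep s' ε x := by
  obtain ⟨F, hF, h⟩ := h
  exact ⟨F, hF.trans hs, h⟩

theorem insert (h : HasGoldenRep s ε x) {t : ℤ} (ht : t ∉ s) (ht_succ : t + 1 ∉ s)
    (ht_pred : t - 1 ∉ s) : HasGoldenRep (insert t s) (-ε) (x + phi ^ t) := by
  obtain ⟨F, hF, hadj, hcard, hsum⟩ := h
  have htF : t ∉ F := fun hm => ht (hF hm)
  refine ⟨Insert.insert t F, ?_, fun i hi => ?_, ?_, ?_⟩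
  · rw [Finset.coe_insert]
    exact Set.insert_subset_insert hF
  · rcases Finset.mem_insert.1 hi with rfl | hiF
    · simpa using fun hm => ht_succ (hF hm)
    · have : i + 1 ≠ t := by
        rintro rfl
        exact ht_pred (by simpa using hF hiF)
      simpa [this] using hadj i hiF
  · rw [Finset.card_insert_of_notMem htF, pow_succ, hcard, mul_neg_one]
  · rw [Finset.sum_insert htF, hsum, add_comm]

theorem insert_of_abs_mem_Ioo {m M : ℤ} (h : HasGoldenRep (Set.Ioo (-m) m) ε x) {t : ℤ}
    (ht : |t| ∈ Set.Ioo m M) : HasGoldenRep (Set.Ioo (-M) M) (-ε) (x + phi ^ t) := by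
  simp only [Set.mem_Ioo, abs_lt, lt_abs] at ht
  refine (h.insert (t := t) ?_ ?_ ?_).mono (Set.insert_subset ?_ fun i hi => ?_)
  all_goals
    simp only [Set.mem_Ioo] at *
    omega

theorem insert_insert_neg {m M : ℤ} (h : HasGoldenRep (Set.Ioo (-m) m) ε x) {p q : ℤ}
    (hp : p ∈ Set.Ioo m M) (hq : q ∈ Set.Ioo m M) (hpq : 2 ≤ p + q) :
    HasGoldenRep (Set.Ioo (-M) M) ε (x + phi ^ p + phi ^ (-q)) := by
  rw [← neg_neg ε]
  refine ((h.insert (t := p) ?_ ?_ ?_).insert (t := -q) ?_ ?_ ?_).mono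
    (Set.insert_subset ?_ (Set.insert_subset ?_ fun i hi => ?_))
  all_goals
    simp only [Set.mem_Ioo, Set.mem_insert_iff] at *
    omega

theorem exists_isBasePhi {N : ℕ} (h : HasGoldenRep s ε N) :
    ∃ d, IsBasePhi N d ∧ (-1) ^ digitSum d = ε := by
  obtain ⟨F, -, hadj, hcard, hsum⟩ := h
  refine ⟨fun i => if i ∈ F then 1 else 0, ⟨?_, fun i => ?_, fun i => ?_, ?_⟩, ?_⟩
  · exact F.finite_toSet.subset fun i hi => by simpa using hi
  · dsimp only
    split_ifs <;> simp
  · by_cases hi : i ∈ F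
    · simp [hadj i hi]
    · simp [hi]
  · rw [tsum_eq_sum (s := F) fun i hi => by simp [hi], ← hsum]
    exact Finset.sum_congr rfl fun i hi => by simp [hi]
  · rw [digitSum, tsum_eq_sum (s := F) fun i hi => by simp [hi]]
    simpa using hcard

end HasGoldenRep

/-- `N` has a base-phi expansion with digit sign `ε` and all digits at exponents less than
`2 * n - 1` in absolute value: the shape of the expansions of `0, …, Lucas (2 * n - 1)`. -/
def InitialRep (n N : ℕ) (ε : ℝ) : Prop :=
  HasGoldenRep (Set.Ioo (-(2 * n - 1)) (2 * n - 1)) ε N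

/-- `N` has a base-phi expansion with digit sign `ε`, extreme digits at `2 * n + 1` and
`-(2 * n + 2)`, and all others at exponents less than `2 * n` in absolute value: the shape of the
expansions of the integers strictly between `Lucas (2 * n + 1)` and `Lucas (2 * n + 2)`.
The two extreme digits do not affect the sign. -/
def GapRep (n N : ℕ) (ε : ℝ) : Prop :=
  HasGoldenRep (Set.Ioo (-(2 * n)) (2 * n)) ε
    (N - phi ^ (2 * n + 1 : ℤ) - phi ^ (-(2 * n + 2) : ℤ))

variable {n N : ℕ} {ε : ℝ}

theorem InitialRep.succ (h : InitialRep n N ε) : InitialRep (n + 1) N ε :=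
  h.mono (Set.Ioo_subset_Ioo (by push_cast; omega) (by push_cast; omega))

theorem InitialRep.add_lucas (hn : 0 < n) (h : InitialRep n N ε) :
    InitialRep (n + 1) (Lucas (2 * n) + N) ε := by
  have h' := h.insert_insert_neg (p := 2 * n) (q := 2 * n) (M := 2 * (n + 1 : ℕ) - 1)
    ⟨by omega, by omega⟩ ⟨by omega, by omega⟩ (by omega)
  unfold InitialRep
  convert h' using 1
  rw [Nat.cast_add, lucas_two_mul_eq]
  ring

theorem GapRep.initialRep (h : GapRep n N ε) : InitialRep (n + 2) N ε := by
  have h' := h.insert_insert_neg (p := 2 * n + 1) (q := 2 * n + 2) (M := 2 * (n + 2 : ℕ) - 1)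
    ⟨by omega, by omega⟩ ⟨by omega, by omega⟩ (by omega)
  unfold InitialRep
  convert h' using 1
  ring

theorem GapRep.add_lucas_even (h : GapRep n N ε) :
    GapRep (n + 1) (Lucas (2 * n + 2) + N) (-ε) := by
  have h' := h.insert_of_abs_mem_Ioo (t := -(2 * n + 1)) (M := 2 * (n + 1 : ℕ))
    ⟨by grind, by grind⟩
  have hL := lucas_two_mul_eq (n + 1)
  have hcarry_pos := phi_zpow_add_two (2 * n + 1)
  have hcarry_neg := two_mul_phi_zpow (-(2 * n + 2))
  unfold GapRep
  convert h' using 1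
  rw [mul_add_one] at hL
  push_cast at hL ⊢
  rw [hL]
  ring_nf at hcarry_pos hcarry_neg ⊢
  linarith

theorem GapRep.add_lucas_odd (h : GapRep n N ε) :
    GapRep (n + 1) (Lucas (2 * n + 3) + N) (-ε) := by
  have h' := h.insert_of_abs_mem_Ioo (t := 2 * n + 1) (M := 2 * (n + 1 : ℕ))
    ⟨by grind, by grind⟩
  have hL := lucas_two_mul_add_one_eq (n + 1)
  have hborrow := phi_zpow_add_two (-(2 * n + 4))
  unfold GapRep
  convert h' using 1
  rw [mul_add_one] at hL
  push_cast at hL ⊢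
  rw [hL]
  ring_nf at hborrow ⊢
  linarith

theorem InitialRep.gapRep (hn : 0 < n) (h : InitialRep n N ε) :
    GapRep (n + 1) (Lucas (2 * n + 3) + Lucas (2 * n) + N) ε := by
  have h' := h.insert_insert_neg (p := 2 * n) (q := 2 * n + 1) (M := 2 * (n + 1 : ℕ))
    ⟨by omega, by omega⟩ ⟨by omega, by omega⟩ (by omega)
  have hL := lucas_two_mul_add_one_eq (n + 1)
  have hborrow := phi_zpow_add_two (-(2 * n + 2))
  have hborrow' := phi_zpow_add_two (-(2 * n + 4))
  unfold GapRep
  convert h' using 1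
  rw [mul_add_one] at hL
  push_cast at hL ⊢
  rw [hL, lucas_two_mul_eq]
  ring_nf at hborrow hborrow' ⊢
  linarith

end Expansions

section SignWords

mutual

/-- The word of digit signs of the integers in `[0, Lucas (2 * n - 1)]`. The empty word at `0` fits
the recursions, the Lucas number of index `-1` being `-1`. -/
noncomputable def initialWord : ℕ → List ℝ
  | 0 => []
  | 1 => [1, -1]
  | n + 2 => initialWord (n + 1) ++ gapWord n ++ initialWord (n + 1)

/-- The word of digit signs of the integers strictly between `Lucas (2 * n + 1)` and
`Lucas (2 * n + 2)`. -/
noncomputable def gapWord : ℕ → List ℝ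
  | 0 => [1]
  | n + 1 => (gapWord n).map Neg.neg ++ initialWord n ++ (gapWord n).map Neg.neg

end

theorem initialWord_add_two (n : ℕ) :
    initialWord (n + 2) = initialWord (n + 1) ++ gapWord n ++ initialWord (n + 1) := by
  rw [initialWord]

theorem gapWord_succ (n : ℕ) :
    gapWord (n + 1) =
      (gapWord n).map Neg.neg ++ initialWord n ++ (gapWord n).map Neg.neg := by
  rw [gapWord]

theorem length_words (n : ℕ) :
    (initialWord n).length + Lucas (2 * n) = Lucas (2 * n + 1) + 1 ∧
      (initialWord (n + 1)).length = Lucas (2 * n + 1) + 1 ∧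
      (gapWord n).length + 1 = Lucas (2 * n) := by
  induction n with
  | zero => simp [initialWord, gapWord, Lucas]
  | succ n ih =>
    obtain ⟨ih₀, ih₁, ihg⟩ := ih
    rw [initialWord_add_two, gapWord_succ, mul_add_one, lucas_add_two (2 * n + 1),
      lucas_add_two (2 * n)]
    simp only [List.length_append, List.length_map]
    omega

theorem ReadsFrom.initialWord_add_two {n : ℕ}
    (hi : ReadsFrom (InitialRep (n + 1)) 0 (initialWord (n + 1)))
    (hg : ReadsFrom (GapRep n) (Lucas (2 * n + 1) + 1) (gapWord n)) :
    ReadsFrom (InitialRep (n + 2)) 0 (initialWord (n + 2)) := by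
  obtain ⟨-, hleni, hleng⟩ := length_words n
  have hleft : ReadsFrom (InitialRep (n + 2)) 0 (initialWord (n + 1)) :=
    fun i hi' => (hi i hi').succ
  have hmid : ReadsFrom (InitialRep (n + 2)) (Lucas (2 * n + 1) + 1) (gapWord n) :=
    fun i hi' => (hg i hi').initialRep
  have hright := hi.shift (Lucas (2 * (n + 1))) fun _ _ h => h.add_lucas n.succ_pos
  rw [_root_.initialWord_add_two]
  refine (hleft.append hmid (by omega)).append hright ?_
  rw [List.length_append, mul_add_one, lucas_add_two (2 * n)]
  omega

theorem ReadsFrom.gapWord_succ {n : ℕ} (hi : ReadsFrom (InitialRep n) 0 (initialWord n))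
    (hg : ReadsFrom (GapRep n) (Lucas (2 * n + 1) + 1) (gapWord n)) :
    ReadsFrom (GapRep (n + 1)) (Lucas (2 * n + 3) + 1) (gapWord (n + 1)) := by
  obtain ⟨hleni, -, hleng⟩ := length_words n
  have hleft := hg.map (Lucas (2 * n + 2)) Neg.neg fun _ _ h => h.add_lucas_even
  have hmid : ReadsFrom (GapRep (n + 1)) (Lucas (2 * n + 3) + Lucas (2 * n)) (initialWord n) := by
    rcases n.eq_zero_or_pos with rfl | hn
    · rw [initialWord]
      exact .nil
    · exact hi.shift _ fun _ _ h => h.gapRep hn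
  have hright := hg.map (Lucas (2 * n + 3)) Neg.neg fun _ _ h => h.add_lucas_odd
  have hL : Lucas (2 * n + 3) = Lucas (2 * n + 2) + Lucas (2 * n + 1) := rfl
  rw [_root_.gapWord_succ, hL, add_assoc]
  rw [hL] at hmid hright
  refine (hleft.append hmid ?_).append hright ?_ <;>
    simp only [List.length_append, List.length_map] <;> omega

theorem readsFrom_words (n : ℕ) :
    ReadsFrom (InitialRep n) 0 (initialWord n) ∧
      ReadsFrom (InitialRep (n + 1)) 0 (initialWord (n + 1)) ∧
      ReadsFrom (GapRep n) (Lucas (2 * n + 1) + 1) (gapWord n) := by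
  induction n with
  | zero =>
    refine ⟨?_, ?_, ?_⟩
    · rw [initialWord]
      exact .nil
    · intro i hi
      have : i < 2 := by simpa [initialWord] using hi
      interval_cases i
      · exact ⟨∅, by simp [initialWord]⟩
      · exact ⟨{0}, by simp [initialWord]⟩
    · intro i hi
      obtain rfl : i = 0 := by simpa [gapWord] using hi
      have h_two : (2 : ℝ) - phi - phi ^ (-2 : ℤ) = 0 := by
        have := two_mul_phi_zpow 0
        norm_num at this ⊢
        linarith
      exact ⟨∅, by simpa [gapWord, Lucas] using h_two.symm⟩
  | succ n ih =>
    obtain ⟨hi, hi', hg⟩ := ih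
    exact ⟨hi', hi'.initialWord_add_two hg, hi.gapWord_succ hg⟩

end SignWords

section PartialSums

theorem sum_initialWord_add_two (n : ℕ) :
    (initialWord (n + 2)).sum = 2 * (initialWord (n + 1)).sum + (gapWord n).sum := by
  rw [initialWord_add_two]
  simp only [List.sum_append]
  ring

theorem sum_gapWord_succ (n : ℕ) :
    (gapWord (n + 1)).sum = (initialWord n).sum - 2 * (gapWord n).sum := by
  rw [gapWord_succ]
  simp only [List.sum_append, ← List.sum_neg]
  ring

theorem sum_initialWord_add_three (n : ℕ) :
    (initialWord (n + 3)).sum = 4 * (initialWord (n + 1)).sum + (initialWord n).sum := by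
  linear_combination sum_initialWord_add_two (n + 1) + 2 * sum_initialWord_add_two n +
    sum_gapWord_succ n

theorem abs_sum_initialWord_le (n : ℕ) : |(initialWord n).sum| ≤ (9 / 4) ^ n := by
  induction n using Nat.strong_induction_on with
  | _ n ih =>
    match n with
    | 0 => simp [initialWord]
    | 1 => norm_num [initialWord]
    | 2 => norm_num [initialWord, gapWord]
    | n + 3 =>
      have hpow : (0 : ℝ) < (9 / 4) ^ n := by positivity
      calc |(initialWord (n + 3)).sum|
          = |4 * (initialWord (n + 1)).sum + (initialWord n).sum| := by
            rw [sum_initialWord_add_three]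
        _ ≤ 4 * |(initialWord (n + 1)).sum| + |(initialWord n).sum| := by
            simpa [abs_mul] using abs_add_le (4 * (initialWord (n + 1)).sum) (initialWord n).sum
        _ ≤ 4 * (9 / 4) ^ (n + 1) + (9 / 4) ^ n := by
            gcongr <;> exact ih _ (by omega)
        _ ≤ (9 / 4) ^ (n + 3) := by
            rw [pow_succ, pow_add]
            linarith

theorem abs_sum_gapWord_le (n : ℕ) : |(gapWord n).sum| ≤ 10 * (9 / 4) ^ n := by
  have h₁ := abs_le.1 (abs_sum_initialWord_le (n + 1))
  have h₂ := abs_le.1 (abs_sum_initialWord_le (n + 2))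
  have hpow : (0 : ℝ) < (9 / 4) ^ n := by positivity
  rw [sum_initialWord_add_two, pow_add] at h₂
  rw [pow_succ] at h₁
  exact abs_le.2 ⟨by linarith, by linarith⟩

theorem prefixSumsLE_words (n : ℕ) :
    PrefixSumsLE (initialWord n) (10 * (9 / 4) ^ n) ∧
      PrefixSumsLE (initialWord (n + 1)) (10 * (9 / 4) ^ n) ∧
      PrefixSumsLE (gapWord n) (10 * (9 / 4) ^ n) := by
  induction n with
  | zero =>
    refine ⟨fun k => ?_, fun k => ?_, fun k => ?_⟩
    · simp [initialWord]
    · rcases k with _ | _ | k <;> norm_num [initialWord]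
    · rcases k with _ | k <;> norm_num [gapWord]
  | succ n ih =>
    obtain ⟨hi, hi', hg⟩ := ih
    have hpow : (0 : ℝ) < (9 / 4) ^ n := by positivity
    have hsumi := abs_sum_initialWord_le n
    have hsumi' := abs_sum_initialWord_le (n + 1)
    have hsumg := abs_sum_gapWord_le n
    rw [initialWord_add_two, gapWord_succ]
    rw [pow_succ] at hsumi' ⊢
    refine ⟨hi'.mono (by linarith), (hi'.append_append hg hi').mono (by linarith),
      (hg.map_neg.append_append hi hg.map_neg).mono ?_⟩
    rw [← List.sum_neg, abs_neg]
    linarith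

end PartialSums

section DigitParity

/-- `T` is the parity of the base-phi sum of digits. -/
def IsDigitParity (T : ℕ → ℕ) : Prop :=
  ∀ (N : ℕ) (d : ℤ → ℕ), IsBasePhi N d → T N = digitSum d % 2

variable {T : ℕ → ℕ}

theorem pow_lt_length_initialWord_succ (n : ℕ) :
    (5 / 2 : ℝ) ^ n < (initialWord (n + 1)).length := by
  rw [(length_words n).2.1]
  push_cast
  linarith [pow_le_lucas_odd n]

theorem exists_isBasePhi (N : ℕ) : ∃ d, IsBasePhi N d := by
  obtain ⟨n, hn⟩ := pow_unbounded_of_one_lt (N : ℝ) (by norm_num : (1 : ℝ) < 5 / 2)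
  have hlen : N < (initialWord (n + 1)).length :=
    mod_cast hn.trans (pow_lt_length_initialWord_succ n)
  have hrep := (readsFrom_words n).2.1 N hlen
  rw [zero_add] at hrep
  obtain ⟨d, hd, -⟩ := hrep.exists_isBasePhi
  exact ⟨d, hd⟩

namespace IsDigitParity

theorem lt_two (hT : IsDigitParity T) (N : ℕ) : T N < 2 := by
  obtain ⟨d, hd⟩ := exists_isBasePhi N
  rw [hT N d hd]
  exact Nat.mod_lt _ two_pos

theorem neg_one_pow_eq (hT : IsDigitParity T) {n N : ℕ} {ε : ℝ} (h : InitialRep n N ε) :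
    (-1) ^ T N = ε := by
  obtain ⟨d, hd, hε⟩ := h.exists_isBasePhi
  rw [hT N d hd, ← neg_one_pow_eq_pow_mod_two, hε]

theorem readsFrom_initialWord (hT : IsDigitParity T) (n : ℕ) :
    ReadsFrom (fun N ε => (-1 : ℝ) ^ T N = ε) 0 (initialWord n) :=
  fun i hi => hT.neg_one_pow_eq ((readsFrom_words n).1 i hi)

theorem abs_sum_neg_one_pow_le (hT : IsDigitParity T) (n x : ℕ) (hx : (x : ℝ) ≤ (5 / 2) ^ n) :
    |∑ N ∈ Finset.range x, (-1 : ℝ) ^ T N| ≤ 10 * (9 / 4) ^ n := by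
  have hlen : x ≤ (initialWord (n + 1)).length :=
    mod_cast hx.trans (pow_lt_length_initialWord_succ n).le
  rw [← (hT.readsFrom_initialWord (n + 1)).sum_take hlen]
  exact (prefixSumsLE_words n).2.1 x

theorem isLittleO_sum_neg_one_pow (hT : IsDigitParity T) :
    (fun x => ∑ N ∈ Finset.range x, (-1 : ℝ) ^ T N) =o[atTop] fun x : ℕ => (x : ℝ) :=
  isLittleO_natCast_of_le_pow (by norm_num) (by norm_num) hT.abs_sum_neg_one_pow_le

end IsDigitParity

end DigitParity

/-- The letters 0 and 1 each have frequency 1/2 in the sequence `T`. -/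
theorem freq_letters (T : ℕ → ℕ)
    (hT : ∀ (N : ℕ) (d : ℤ → ℕ), IsBasePhi N d → T N = digitSum d % 2) :
    Filter.Tendsto
      (fun x : ℕ => (((Finset.range x).filter fun N => T N = 0).card : ℝ) / x)
      Filter.atTop (nhds (1 / 2)) ∧
    Filter.Tendsto
      (fun x : ℕ => (((Finset.range x).filter fun N => T N = 1).card : ℝ) / x)
      Filter.atTop (nhds (1 / 2)) := by
  have hT : IsDigitParity T := hT
  have hS := hT.isLittleO_sum_neg_one_pow
  exact ⟨tendsto_card_filter_range_div hT.lt_two hS zero_lt_two,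
    tendsto_card_filter_range_div hT.lt_two hS one_lt_two⟩
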